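/- arXiv:1602.02451 — 2 statements merged into one kernel-verified Lean document; each statement's English description precedes it below -/
import Mathlib

section
/- Assume the bootstrap setup with parameters ε₀ ∈ (0,1), 0 < K₀ < K₁, β ∈ (0,1), κ > 1 satisfying ε₀ ≤ κ ε₀^{1/β} and ε₀^{1−β} ≤ 1/2. Let φ ∈ C¹(ℝ⁺ × [0,T)) be a solution of the flow-map equation with data φ₀ ≡ ε₀ and g, with inf_{(x,t) ∈ ℝ⁺×[0,T']} φ(x,t) > 0 for every T' < T, and suppose the bootstrap property (B) holds on [0,T). Then, with ε(t) = φ(0,t) and c_β = β(β+1)/((2β+1)(1−β)), one has −ε'(t) ≥ (ε₀² K₀ c_β / (2κ)) · ε(t)^β for all t ∈ [0,T). -/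
/-!
Writing `ε = φ(0,·)` and `l = ε ^ β`, the equation reads `-ε' = ε ∫₀^∞ (-g') / Φ`, so an upper bound
for `Φ` is needed. Since `g' ≤ 0`, each `φ(x,·)` is nonincreasing
(`IsFlowMapSolution.antitoneOn`). If `l(t) ≤ x ≤ l(0)`, there is an earlier time `s ≤ t` with
`l(s) = x`, whence `φ(x,t) ≤ φ(x,s) ≤ κ ε(s) = κ x ^ (1/β)`; if `x ≥ l(0)`, the first smallness
condition gives the same bound from `φ ≤ ε₀`. Hence `φ(·,t) ≤ κ z ^ (1/β)` on `[0,z]` and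
`Φ(z,t) ≤ κ z ^ (1/β) z` for every `z ≥ l(t)`
(`phi_le_rpow`, `Phi_le_rpow`).

Already the interval `[l(t), 1]` suffices for the estimate: there `-g'(z)/Φ(z,t)` is at least
`ε₀² K₀ / κ · z ^ (-1/β)`, whose integral is `ε₀² K₀ / κ · β/(1-β) · (ε ^ (β-1) - 1)`. After
multiplication by `ε`, the condition `ε ^ (1-β) ≤ 1/2` absorbs the `-1` at the cost of a factor
`1/2`, and `(β+1)/(2β+1) ≤ 1` leaves `c_β / 2`. Discarding the rest of `(0,∞)` is legitimate
because `g'/Φ` is integrable (`integrableOn_gD_div_Phi`): it is bounded near `0`, where `g'`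
vanishes linearly, and it vanishes for large `z`.
-/

open Set MeasureTheory Filter Topology

noncomputable def gD (g : ℝ → ℝ) (z : ℝ) : ℝ := derivWithin g (Set.Ici 0) z

noncomputable def Phi (φ : ℝ → ℝ → ℝ) (z t : ℝ) : ℝ := ∫ σ in (0:ℝ)..z, φ σ t

/-- Admissible data for the flow-map equation: `φ₀ ∈ C¹(ℝ⁺)`, `g ∈ C²(ℝ⁺)` with
compact support in `ℝ⁺`, `inf φ₀ > 0` and `g'(0) = 0`. -/
def AdmissibleData (φ₀ g : ℝ → ℝ) : Prop :=
  ContDiffOn ℝ 1 φ₀ (Set.Ici 0) ∧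
  ContDiffOn ℝ 2 g (Set.Ici 0) ∧
  (∃ a : ℝ, ∀ z ≥ a, g z = 0) ∧
  (∃ m : ℝ, 0 < m ∧ ∀ x ≥ (0:ℝ), m ≤ φ₀ x) ∧
  gD g 0 = 0

/-- `φ` is a `C¹(ℝ⁺ × I)` solution of the flow-map equation
`∂ₜφ(x,t) = φ(x,t) ∫_x^∞ g'(z)/Φ(z,t) dz`, `φ(x,0) = φ₀(x)`. -/
def IsFlowMapSolution (φ₀ g : ℝ → ℝ) (φ : ℝ → ℝ → ℝ) (I : Set ℝ) : Prop :=
  ContDiffOn ℝ 1 (fun p : ℝ × ℝ => φ p.1 p.2) (Set.Ici 0 ×ˢ I) ∧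
  (∀ x ≥ (0:ℝ), φ x 0 = φ₀ x) ∧
  (∀ x ≥ (0:ℝ), ∀ t ∈ I,
    HasDerivWithinAt (fun s => φ x s)
      (φ x t * ∫ z in Set.Ioi x, gD g z / Phi φ z t) I t)

/-- `inf_{(x,t) ∈ ℝ⁺ × I} φ(x,t) > 0`. -/
def PosInfOn (φ : ℝ → ℝ → ℝ) (I : Set ℝ) : Prop :=
  ∃ m : ℝ, 0 < m ∧ ∀ x ≥ (0:ℝ), ∀ t ∈ I, m ≤ φ x t
/-- The constant `c_β = β(β+1)/((2β+1)(1−β))`. -/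
noncomputable def cBeta (β : ℝ) : ℝ := β * (β + 1) / ((2 * β + 1) * (1 - β))

/-- The bootstrap setup: data `φ₀ ≡ ε₀ ∈ (0,1)`, `g ∈ C²(ℝ⁺)` compactly supported with
`g'(0) = 0`, `g' ≤ 0` on `ℝ⁺`, and constants `0 < K₀ < K₁` with
`ε₀² K₀ z ≤ −g'(z) ≤ ε₀² K₁ z` for `0 ≤ z ≤ 1`. -/
def BootstrapData (ε₀ K₀ K₁ : ℝ) (g : ℝ → ℝ) : Prop :=
  ε₀ ∈ Set.Ioo (0:ℝ) 1 ∧ 0 < K₀ ∧ K₀ < K₁ ∧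
  ContDiffOn ℝ 2 g (Set.Ici 0) ∧
  (∃ a : ℝ, ∀ z ≥ a, g z = 0) ∧
  gD g 0 = 0 ∧
  (∀ z ≥ (0:ℝ), gD g z ≤ 0) ∧
  (∀ z ∈ Set.Icc (0:ℝ) 1, ε₀ ^ 2 * K₀ * z ≤ -gD g z ∧ -gD g z ≤ ε₀ ^ 2 * K₁ * z)

/-- The bootstrap property (B) on the time interval `I`:
`φ(x,t) ≤ κ ε(t)` for all `x ∈ [0, l(t)]`, `t ∈ I`, where `ε(t) = φ(0,t)`, `l(t) = ε(t)^β`. -/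
def BootstrapB (φ : ℝ → ℝ → ℝ) (κ β : ℝ) (I : Set ℝ) : Prop :=
  ∀ t ∈ I, ∀ x ∈ Set.Icc (0:ℝ) ((φ 0 t) ^ β), φ x t ≤ κ * φ 0 t

lemma continuousOn_gD {g : ℝ → ℝ} (hg : ContDiffOn ℝ 2 g (Set.Ici 0)) :
    ContinuousOn (gD g) (Set.Ici 0) :=
  hg.continuousOn_derivWithin (uniqueDiffOn_Ici 0) (by norm_num)

lemma gD_eq_zero {g : ℝ → ℝ} {a : ℝ} (ha : ∀ z ≥ a, g z = 0) {z : ℝ} (hz : max a 0 < z) :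
    gD g z = 0 := by
  have h1 : a < z := lt_of_le_of_lt (le_max_left _ _) hz
  have h2 : 0 < z := lt_of_le_of_lt (le_max_right _ _) hz
  have h3 : g =ᶠ[𝓝 z] fun _ => (0:ℝ) := by
    filter_upwards [Ioi_mem_nhds h1] with y hy using ha y (le_of_lt hy)
  unfold gD
  rw [derivWithin_of_mem_nhds (Ici_mem_nhds h2), h3.deriv_eq]
  simp

/-- Linear control of `g'` on all of `ℝ⁺`: near `0` it is assumed, and away from `0` it follows
from compactness of the support. -/
lemma exists_abs_gD_le {ε₀ K₀ K₁ : ℝ} {g : ℝ → ℝ} (hB : BootstrapData ε₀ K₀ K₁ g) :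
    ∃ L : ℝ, ∀ z ≥ (0:ℝ), |gD g z| ≤ L * z := by
  obtain ⟨-, hK, hKK, hg, ⟨a, ha⟩, -, hneg, hlin⟩ := hB
  obtain ⟨M, hM⟩ := (isCompact_Icc (a := (0:ℝ)) (b := max a 0)).exists_bound_of_continuousOn
    ((continuousOn_gD hg).mono (fun x hx => hx.1))
  have hM0 : 0 ≤ M := le_trans (norm_nonneg _) (hM 0 ⟨le_rfl, le_max_right _ _⟩)
  have hK1 : 0 ≤ ε₀ ^ 2 * K₁ := by
    have : 0 < K₁ := hK.trans hKK
    positivity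
  refine ⟨ε₀ ^ 2 * K₁ + M, fun z hz => ?_⟩
  rcases le_or_gt z 1 with h1 | h1
  · rw [abs_of_nonpos (hneg z hz)]
    nlinarith [(hlin z ⟨hz, h1⟩).2, mul_nonneg hM0 hz]
  · rcases le_or_gt z (max a 0) with h2 | h2
    · have := hM z ⟨hz, h2⟩
      rw [Real.norm_eq_abs] at this
      nlinarith [mul_nonneg hK1 hz]
    · rw [gD_eq_zero ha h2, abs_zero]
      positivity

/-- Integrability of `g'/Φ` at a fixed time; it guards against the junk
value `0` of the integral in the flow-map equation. -/
lemma integrableOn_gD_div_Phi {ε₀ K₀ K₁ m : ℝ} {g : ℝ → ℝ} (hB : BootstrapData ε₀ K₀ K₁ g)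
    {φ : ℝ → ℝ → ℝ} {t : ℝ} (hc : ContinuousOn (fun x => φ x t) (Set.Ici 0)) (hm : 0 < m)
    (hPhi : ∀ z ≥ (0:ℝ), m * z ≤ Phi φ z t) :
    IntegrableOn (fun z => gD g z / Phi φ z t) (Set.Ioi 0) := by
  obtain ⟨L, hL⟩ := exists_abs_gD_le hB
  obtain ⟨-, -, -, hg, ⟨a, ha⟩, -⟩ := hB
  have hcPhi : ContinuousOn (fun z => Phi φ z t) (Set.Ioi 0) := by
    intro z hz
    have hz' : (0:ℝ) < z := hz
    have hint : IntervalIntegrable (fun x => φ x t) volume 0 z :=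
      (hc.mono (by rw [uIcc_of_le hz'.le]; exact fun x hx => hx.1)).intervalIntegrable
    have hcz : ContinuousOn (fun x => φ x t) (Set.Ioi 0) :=
      hc.mono Ioi_subset_Ici_self
    have := intervalIntegral.integral_hasDerivAt_right hint
      (hcz.stronglyMeasurableAtFilter isOpen_Ioi z hz)
      (hcz.continuousAt (Ioi_mem_nhds hz'))
    exact this.continuousAt.continuousWithinAt
  have hcq : ContinuousOn (fun z => gD g z / Phi φ z t) (Set.Ioi 0) := by
    refine ((continuousOn_gD hg).mono Ioi_subset_Ici_self).div hcPhi (fun z hz => ?_)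
    have hz' : (0:ℝ) < z := hz
    exact (lt_of_lt_of_le (mul_pos hm hz') (hPhi z hz'.le)).ne'
  have h1 : IntegrableOn (fun z => gD g z / Phi φ z t) (Set.Ioc 0 (max a 0)) := by
    refine IntegrableOn.of_bound (C := L / m) (by simp)
      ((hcq.mono (fun x hx => hx.1)).aestronglyMeasurable measurableSet_Ioc) ?_
    refine (ae_restrict_iff' measurableSet_Ioc).2 (Eventually.of_forall fun z hz => ?_)
    have hz' : (0:ℝ) < z := hz.1
    have hp := hPhi z hz'.le
    have hp0 : 0 < Phi φ z t := lt_of_lt_of_le (mul_pos hm hz') hp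
    have hL0 : 0 ≤ L := by
      have := (abs_nonneg _).trans (hL z hz'.le)
      exact nonneg_of_mul_nonneg_left this hz'
    rw [Real.norm_eq_abs, abs_div, abs_of_pos hp0, div_le_div_iff₀ hp0 hm]
    calc |gD g z| * m ≤ L * z * m := by gcongr; exact hL z hz'.le
      _ = L * (m * z) := by ring
      _ ≤ L * Phi φ z t := by gcongr
  have h2 : IntegrableOn (fun z => gD g z / Phi φ z t) (Set.Ioi (max a 0)) := by
    refine (integrableOn_zero (s := Set.Ioi (max a 0))).congr_fun (fun z hz => ?_)
      measurableSet_Ioi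
    simp [gD_eq_zero ha hz]
  rw [← Ioc_union_Ioi_eq_Ioi (le_max_right a 0)]
  exact h1.union h2

lemma IsFlowMapSolution.continuousOn_left {φ₀ g : ℝ → ℝ} {φ : ℝ → ℝ → ℝ} {I : Set ℝ}
    (h : IsFlowMapSolution φ₀ g φ I) {t : ℝ} (ht : t ∈ I) :
    ContinuousOn (fun x => φ x t) (Set.Ici 0) :=
  h.1.continuousOn.comp (f := fun x : ℝ => (x, t)) (by fun_prop) (fun _ hx => ⟨hx, ht⟩)

lemma mul_le_Phi {φ : ℝ → ℝ → ℝ} {t m : ℝ} (hc : ContinuousOn (fun x => φ x t) (Set.Ici 0))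
    (hm : ∀ x ≥ (0:ℝ), m ≤ φ x t) {z : ℝ} (hz : 0 ≤ z) : m * z ≤ Phi φ z t := by
  have hint : IntervalIntegrable (fun x => φ x t) volume 0 z :=
    (hc.mono (by rw [uIcc_of_le hz]; exact fun x hx => hx.1)).intervalIntegrable
  have := intervalIntegral.integral_mono_on hz (intervalIntegrable_const (c := m)) hint
    (fun x hx => hm x hx.1)
  simp only [intervalIntegral.integral_const, sub_zero, smul_eq_mul] at this
  rw [mul_comm]
  exact this

/-- Each `φ(x,·)` is nonincreasing because `g' ≤ 0`. -/
lemma IsFlowMapSolution.antitoneOn {φ₀ g : ℝ → ℝ} {φ : ℝ → ℝ → ℝ} {T : ℝ}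
    (h : IsFlowMapSolution φ₀ g φ (Set.Ico 0 T)) (hneg : ∀ z ≥ (0:ℝ), gD g z ≤ 0)
    (hpos : ∀ t ∈ Set.Ico 0 T, ∀ x ≥ (0:ℝ), 0 < φ x t) {x : ℝ} (hx : 0 ≤ x) :
    AntitoneOn (fun s => φ x s) (Set.Ico 0 T) := by
  refine antitoneOn_of_hasDerivWithinAt_nonpos (convex_Ico 0 T)
    (fun s hs => (h.2.2 x hx s hs).continuousWithinAt)
    (fun s hs => (h.2.2 x hx s (interior_subset hs)).mono interior_subset) (fun s hs => ?_)
  have hs' := interior_subset hs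
  refine mul_nonpos_of_nonneg_of_nonpos (hpos s hs' x hx).le ?_
  refine setIntegral_nonpos measurableSet_Ioi (fun z hz => ?_)
  have hz0 : 0 ≤ z := hx.trans (le_of_lt hz)
  refine div_nonpos_of_nonpos_of_nonneg (hneg z hz0) ?_
  exact intervalIntegral.integral_nonneg hz0 (fun y hy => (hpos s hs' y hy.1).le)

/-- The bootstrap property at earlier times controls `φ(x,t)` for `x` beyond `l(t)`: such an `x`
is either `l(s)` for some `s ≤ t`, or at least `l(0) = ε₀ ^ β`. -/
lemma phi_le_rpow {ε₀ β κ T : ℝ} {φ : ℝ → ℝ → ℝ} (hε : ε₀ ∈ Set.Ioo (0:ℝ) 1)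
    (hβ : β ∈ Set.Ioo (0:ℝ) 1) (hκ : 1 < κ) (hcond1 : ε₀ ≤ κ * ε₀ ^ (1 / β))
    (hinit : ∀ x ≥ (0:ℝ), φ x 0 = ε₀)
    (hcont : ContinuousOn (fun s => φ 0 s) (Set.Ico 0 T))
    (hanti : ∀ x ≥ (0:ℝ), AntitoneOn (fun s => φ x s) (Set.Ico 0 T))
    (hpos : ∀ t ∈ Set.Ico 0 T, ∀ x ≥ (0:ℝ), 0 < φ x t)
    (hboot : BootstrapB φ κ β (Set.Ico 0 T)) {t : ℝ} (ht : t ∈ Set.Ico 0 T) {x : ℝ}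
    (hx : (φ 0 t) ^ β ≤ x) : φ x t ≤ κ * x ^ (1 / β) := by
  have hβ0 := hβ.1
  have hεt := hpos t ht 0 le_rfl
  have hx0 : 0 < x := lt_of_lt_of_le (Real.rpow_pos_of_pos hεt β) hx
  have h0T : (0:ℝ) ∈ Set.Ico 0 T := ⟨le_rfl, ht.1.trans_lt ht.2⟩
  rcases le_total x (ε₀ ^ β) with h | h
  · have hmem : x ^ (1 / β) ∈ Set.Icc (φ 0 t) (φ 0 0) := by
      constructor
      · rw [one_div, Real.le_rpow_inv_iff_of_pos hεt.le hx0.le hβ0]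
        exact hx
      · rw [hinit 0 le_rfl, one_div, Real.rpow_inv_le_iff_of_pos hx0.le hε.1.le hβ0]
        exact h
    obtain ⟨s, hs, hsx⟩ := intermediate_value_Icc' ht.1
      (hcont.mono (fun y hy => ⟨hy.1, hy.2.trans_lt ht.2⟩)) hmem
    have hsT : s ∈ Set.Ico 0 T := ⟨hs.1, hs.2.trans_lt ht.2⟩
    have hsx' : φ 0 s = x ^ (1 / β) := hsx
    have hl : (φ 0 s) ^ β = x := by
      rw [hsx', ← Real.rpow_mul hx0.le, one_div_mul_cancel hβ0.ne', Real.rpow_one]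
    calc φ x t ≤ φ x s := hanti x hx0.le hsT ht hs.2
      _ ≤ κ * φ 0 s := hboot s hsT x ⟨hx0.le, hl.ge⟩
      _ = _ := by rw [hsx']
  · have h1 : ε₀ ≤ x := by
      refine le_trans ?_ h
      simpa using Real.rpow_le_rpow_of_exponent_ge hε.1 hε.2.le hβ.2.le
    calc φ x t ≤ φ x 0 := hanti x hx0.le h0T ht ht.1
      _ = ε₀ := hinit x hx0.le
      _ ≤ κ * ε₀ ^ (1 / β) := hcond1
      _ ≤ κ * x ^ (1 / β) := by
        gcongr
        exact hε.1.le

/-- Integrated form of the bound `φ(σ,t) ≤ κ z ^ (1/β)`, valid for all `σ ≤ z` when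
`z ≥ l(t)`. -/
lemma Phi_le_rpow {β κ t : ℝ} {φ : ℝ → ℝ → ℝ} (hβ : 0 < β) (hκ : 1 < κ)
    (hεt : 0 < φ 0 t) (hc : ContinuousOn (fun x => φ x t) (Set.Ici 0))
    (hin : ∀ x ∈ Set.Icc (0:ℝ) ((φ 0 t) ^ β), φ x t ≤ κ * φ 0 t)
    (hout : ∀ x, (φ 0 t) ^ β ≤ x → φ x t ≤ κ * x ^ (1 / β)) {z : ℝ} (hz : (φ 0 t) ^ β ≤ z) :
    Phi φ z t ≤ κ * z ^ (1 / β) * z := by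
  have hl0 : 0 < (φ 0 t) ^ β := Real.rpow_pos_of_pos hεt β
  have hz0 : 0 ≤ z := hl0.le.trans hz
  have hb : ∀ x ∈ Set.Icc 0 z, φ x t ≤ κ * z ^ (1 / β) := by
    intro x hx
    rcases le_total x ((φ 0 t) ^ β) with h | h
    · refine (hin x ⟨hx.1, h⟩).trans ?_
      gcongr
      rw [one_div, Real.le_rpow_inv_iff_of_pos hεt.le hz0 hβ]
      exact hz
    · refine (hout x h).trans ?_
      gcongr
      · exact hx.1
      · exact hx.2
  have hint : IntervalIntegrable (fun x => φ x t) volume 0 z :=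
    (hc.mono (by rw [uIcc_of_le hz0]; exact fun x hx => hx.1)).intervalIntegrable
  have := intervalIntegral.integral_mono_on hz0 hint
    (intervalIntegrable_const (c := κ * z ^ (1 / β))) hb
  simp only [intervalIntegral.integral_const, sub_zero, smul_eq_mul] at this
  rw [mul_comm]
  exact this

lemma integral_rpow_tail {e β : ℝ} (he : 0 < e) (hβ : β ∈ Set.Ioo (0:ℝ) 1) :
    ∫ z in (e ^ β)..1, z ^ (-(1 / β)) = β / (1 - β) * (e ^ (β - 1) - 1) := by
  have hβ0 := hβ.1
  have hβ1 : 1 - β ≠ 0 := by linarith [hβ.2]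
  have h1 : 1 < 1 / β := by rw [lt_div_iff₀ hβ0]; linarith [hβ.2]
  have hl : 0 < e ^ β := Real.rpow_pos_of_pos he β
  rw [integral_rpow (Or.inr ⟨by linarith, ?_⟩)]
  · rw [← Real.rpow_mul he.le, Real.one_rpow]
    have h2 : β * (-(1 / β) + 1) = β - 1 := by field_simp; ring
    have h3 : -(1 / β) + 1 ≠ 0 := by linarith
    rw [h2]
    have h4 : -(1 / β) + 1 = -((1 - β) / β) := by field_simp; ring
    rw [h4]
    field_simp
    ring
  · rw [mem_uIcc]
    rintro (h | h)
    · linarith [h.1]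
    · linarith [h.1]

/-- The final algebra: half of `β/(1-β) · e ^ β` survives the subtraction of `e`, and it dominates
`c_β / 2 · e ^ β`. -/
lemma cBeta_mul_rpow_le {e β : ℝ} (he : 0 < e) (hβ : β ∈ Set.Ioo (0:ℝ) 1)
    (h : e ^ (1 - β) ≤ 1 / 2) :
    cBeta β / 2 * e ^ β ≤ e * (β / (1 - β) * (e ^ (β - 1) - 1)) := by
  obtain ⟨h0, h1⟩ := hβ
  have h1' : 0 < 1 - β := by linarith
  have e1 : e * e ^ (β - 1) = e ^ β := by
    rw [← Real.rpow_one_add' he.le (by linarith)]; congr 1; ring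
  have e2 : e = e ^ (1 - β) * e ^ β := by
    rw [← Real.rpow_add he]; simp
  have hp : 0 < e ^ β := Real.rpow_pos_of_pos he β
  have h2 : e ≤ 1 / 2 * e ^ β := by
    calc e = e ^ (1 - β) * e ^ β := e2
      _ ≤ _ := by gcongr
  have hc : cBeta β ≤ β / (1 - β) := by
    unfold cBeta
    rw [div_le_div_iff₀ (by positivity) h1']
    nlinarith [mul_pos h0 (mul_pos h0 h1')]
  calc cBeta β / 2 * e ^ β ≤ β / (1 - β) / 2 * e ^ β := by gcongr
    _ = β / (1 - β) * (1 / 2 * e ^ β) := by ring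
    _ ≤ β / (1 - β) * (e ^ β - e) := by
      gcongr
      linarith
    _ = _ := by rw [← e1]; ring

/-- Lemma `lem:lowerBoundEps`: in the bootstrap setup with
`ε₀ ≤ κ ε₀^{1/β}` and `ε₀^{1−β} ≤ 1/2`, if the bootstrap property (B) holds on `[0,T)`,
then `−ε'(t) ≥ (ε₀² K₀ c_β / (2κ)) ε(t)^β` for all `t ∈ [0,T)`, where `ε(t) = φ(0,t)`. -/
theorem statement10 (ε₀ K₀ K₁ β κ T : ℝ) (g : ℝ → ℝ) (φ : ℝ → ℝ → ℝ)
    (hB : BootstrapData ε₀ K₀ K₁ g)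
    (hβ : β ∈ Set.Ioo (0:ℝ) 1) (hκ : 1 < κ)
    (hcond1 : ε₀ ≤ κ * ε₀ ^ (1 / β))
    (hcond2 : ε₀ ^ (1 - β) ≤ 1 / 2)
    (hT : 0 < T)
    (hsol : IsFlowMapSolution (fun _ => ε₀) g φ (Set.Ico 0 T))
    (hinf : ∀ T' < T, PosInfOn φ (Set.Icc 0 T'))
    (hboot : BootstrapB φ κ β (Set.Ico 0 T)) :
    ∀ t ∈ Set.Ico (0:ℝ) T,
      ε₀ ^ 2 * K₀ * cBeta β / (2 * κ) * (φ 0 t) ^ β ≤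
        -derivWithin (fun s => φ 0 s) (Set.Ico 0 T) t := by
  intro t ht
  obtain ⟨hε, hK0, hKK, hg, hsupp, hg0, hneg, hlin⟩ := id hB
  have hβ0 := hβ.1
  have hpos : ∀ t ∈ Set.Ico 0 T, ∀ x ≥ (0:ℝ), 0 < φ x t := by
    intro s hs x hx
    obtain ⟨m, hm, h⟩ := hinf s hs.2
    exact hm.trans_le (h x hx s ⟨hs.1, le_rfl⟩)
  have hanti : ∀ x ≥ (0:ℝ), AntitoneOn (fun s => φ x s) (Set.Ico 0 T) :=
    fun x hx => hsol.antitoneOn hneg hpos hx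
  have hc := hsol.continuousOn_left ht
  have hεt := hpos t ht 0 le_rfl
  have hετ : φ 0 t ≤ ε₀ :=
    (hanti 0 le_rfl ⟨le_rfl, hT⟩ ht ht.1).trans_eq (hsol.2.1 0 le_rfl)
  obtain ⟨m, hm, hmφ⟩ := hinf t ht.2
  have hPhi : ∀ z ≥ (0:ℝ), m * z ≤ Phi φ z t :=
    fun z hz => mul_le_Phi hc (fun x hx => hmφ x hx t ⟨ht.1, le_rfl⟩) hz
  have hPhi_le : ∀ z, (φ 0 t) ^ β ≤ z → Phi φ z t ≤ κ * z ^ (1 / β) * z := fun z hz =>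
    Phi_le_rpow hβ0 hκ hεt hc (hboot t ht)
      (fun x hx => phi_le_rpow hε hβ hκ hcond1 hsol.2.1
        (fun s hs => (hsol.2.2 0 le_rfl s hs).continuousWithinAt) hanti hpos hboot ht hx) hz
  have hintg := integrableOn_gD_div_Phi hB hc hm hPhi
  have hl0 : 0 < (φ 0 t) ^ β := Real.rpow_pos_of_pos hεt β
  have hl1 : (φ 0 t) ^ β ≤ 1 :=
    Real.rpow_le_one hεt.le (hετ.trans hε.2.le) hβ0.le
  rw [(hsol.2.2 0 le_rfl t ht).derivWithin (uniqueDiffOn_Ico 0 T t ht)]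
  have hsub : Set.Ioc ((φ 0 t) ^ β) 1 ⊆ Set.Ioi 0 := fun z hz => hl0.trans hz.1
  have key : ε₀ ^ 2 * K₀ / κ * (β / (1 - β) * ((φ 0 t) ^ (β - 1) - 1)) ≤
      -∫ z in Set.Ioi 0, gD g z / Phi φ z t := by
    rw [← integral_neg, ← integral_rpow_tail hεt hβ, ← intervalIntegral.integral_const_mul,
      intervalIntegral.integral_of_le hl1]
    have hpow : IntegrableOn (fun z : ℝ => ε₀ ^ 2 * K₀ / κ * z ^ (-(1 / β)))
        (Set.Ioc ((φ 0 t) ^ β) 1) := by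
      have : ContinuousOn (fun z : ℝ => ε₀ ^ 2 * K₀ / κ * z ^ (-(1 / β)))
          (Set.Icc ((φ 0 t) ^ β) 1) := by
        refine continuousOn_const.mul (continuousOn_id.rpow_const fun z hz => Or.inl ?_)
        exact (hl0.trans_le hz.1).ne'
      exact this.integrableOn_Icc.mono_set Ioc_subset_Icc_self
    refine (setIntegral_mono_on hpow (hintg.neg.mono_set hsub) measurableSet_Ioc
      (fun z hz => ?_)).trans (setIntegral_mono_set hintg.neg ?_ hsub.eventuallyLE)
    · have hz0 : 0 < z := hsub hz
      have hp0 : 0 < Phi φ z t := (mul_pos hm hz0).trans_le (hPhi z hz0.le)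
      have hzp : 0 < z ^ (1 / β) := Real.rpow_pos_of_pos hz0 _
      have hκ0 : 0 < κ := by linarith
      rw [Pi.neg_apply, ← neg_div (Phi φ z t) (gD g z), le_div_iff₀ hp0, Real.rpow_neg hz0.le]
      calc ε₀ ^ 2 * K₀ / κ * (z ^ (1 / β))⁻¹ * Phi φ z t
          ≤ ε₀ ^ 2 * K₀ / κ * (z ^ (1 / β))⁻¹ * (κ * z ^ (1 / β) * z) := by
            gcongr
            exact hPhi_le z hz.1.le
        _ = ε₀ ^ 2 * K₀ * z := by field_simp
        _ ≤ -gD g z := (hlin z ⟨hz0.le, hz.2⟩).1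
    · refine (ae_restrict_iff' measurableSet_Ioi).2 (Eventually.of_forall fun z hz => ?_)
      have hz0 : (0:ℝ) < z := hz
      have hp0 : 0 < Phi φ z t := (mul_pos hm hz0).trans_le (hPhi z hz0.le)
      exact neg_nonneg.2 (div_nonpos_of_nonpos_of_nonneg (hneg z hz0.le) hp0.le)
  have halg := cBeta_mul_rpow_le hεt hβ
    ((Real.rpow_le_rpow hεt.le hετ (by linarith [hβ.2])).trans hcond2)
  have hκ0 : 0 < κ := by linarith
  calc ε₀ ^ 2 * K₀ * cBeta β / (2 * κ) * (φ 0 t) ^ β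
      = ε₀ ^ 2 * K₀ / κ * (cBeta β / 2 * (φ 0 t) ^ β) := by field_simp
    _ ≤ ε₀ ^ 2 * K₀ / κ * (φ 0 t * (β / (1 - β) * ((φ 0 t) ^ (β - 1) - 1))) := by gcongr
    _ = φ 0 t * (ε₀ ^ 2 * K₀ / κ * (β / (1 - β) * ((φ 0 t) ^ (β - 1) - 1))) := by ring
    _ ≤ φ 0 t * -∫ z in Set.Ioi 0, gD g z / Phi φ z t := by gcongr
    _ = _ := by ring
end

section
/- Assume the bootstrap setup with parameters ε₀ ∈ (0,1), 0 < K₀ < K₁, β ∈ (0,1), κ > 1 satisfying the three conditions: ε₀ ≤ κ ε₀^{1/β}, ε₀^{1−β} ≤ 1/2, and 2K₁/(K₀ c_β β) < log(κ)/κ, where c_β = β(β+1)/((2β+1)(1−β)). Let φ ∈ C¹(ℝ⁺ × [0,T)) be a solution of the flow-map equation with data φ₀ ≡ ε₀ and g, with inf_{(x,t) ∈ ℝ⁺×[0,T']} φ(x,t) > 0 for every T' < T. Then the bootstrap property (B) holds on the whole interval [0,T). -/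
/-!
Since `g' ≤ 0`, the equation `∂ₜ log φ(x,t) = ∫_x^∞ g'/Φ` shows that `φ` is nonincreasing in
time, and, as the initial datum is constant, nondecreasing in space. So (B) only has to be checked
at `x = l(t)`, and a continuity argument reduces it to `bootstrap_improve`: if
`φ(l(s),s) ≤ κ ε(s)` for all `s ≤ t`, then the inequality is strict at `t`.

Two rates are compared for this. On the one hand `Φ(z,t) ≥ ε(t) z`, so the ratio
`φ(x,t)/ε(t)` grows at logarithmic rate at most `ε₀² K₁ x / ε(t)` (`rate_diff_le`). On the other
hand, evaluating the bootstrap bound at the time `s ≤ t` with `l(s) = z` gives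
`φ(z,t) ≤ φ(z,s) ≤ κ z^{1/β}` for `z ≥ l(t)` (`phi_le_rpow`), hence `Φ(z,t) ≤ κ z^{1+1/β}`;
integrating `|g'|/Φ` over `[l(t),1]` shows that `ε` decays at logarithmic rate at least
`C ε^{β-1}` with `C = ε₀² K₀ β / (2κ(1-β))` (`decay_rate`). Therefore `ε^{-β}` grows at rate at
least `β C / ε`, and integration in time bounds `log (φ(x,t)/ε(t))` by `M x ε(t)^{-β}`
with `M = 2 K₁ κ (1-β) / (K₀ β²)`. At `x = l(t) = ε(t)^β` this is `M`, and the smallness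
condition makes `M < log κ`.
-/

open Set MeasureTheory Filter Topology

/-- `g'` vanishes far out, because `g` does. -/
lemma gD_eventually_zero {g : ℝ → ℝ} (h : ∃ a : ℝ, ∀ z ≥ a, g z = 0) :
    ∃ A : ℝ, 1 ≤ A ∧ ∀ z > A, gD g z = 0 := by
  obtain ⟨a, ha⟩ := h
  refine ⟨max a 1, le_max_right _ _, fun z hz => ?_⟩
  have hza : a < z := lt_of_le_of_lt (le_max_left _ _) hz
  have he : g =ᶠ[𝓝[Ici 0] z] fun _ => (0:ℝ) := by
    filter_upwards [mem_nhdsWithin_of_mem_nhds (Ioi_mem_nhds hza)] with y hy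
    exact ha y hy.le
  rw [gD, he.derivWithin_eq (ha z hza.le)]
  simp

section Solution

variable {ε₀ K₀ K₁ T : ℝ} {g : ℝ → ℝ} {φ : ℝ → ℝ → ℝ}

lemma phi_pos (hinf : ∀ T' < T, PosInfOn φ (Icc 0 T')) {x t : ℝ} (hx : 0 ≤ x)
    (ht : t ∈ Ico 0 T) : 0 < φ x t := by
  obtain ⟨m, hm, h⟩ := hinf t ht.2
  exact hm.trans_le (h x hx t ⟨ht.1, le_rfl⟩)

lemma phi_continuousOn_space
    (hsol : IsFlowMapSolution (fun _ => ε₀) g φ (Ico 0 T)) {t : ℝ} (ht : t ∈ Ico 0 T) :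
    ContinuousOn (fun x => φ x t) (Ici 0) :=
  hsol.1.continuousOn.comp (f := fun x : ℝ => (x, t)) (by fun_prop) fun _ hx => ⟨hx, ht⟩

lemma phi_intervalIntegrable
    (hsol : IsFlowMapSolution (fun _ => ε₀) g φ (Ico 0 T)) {t : ℝ} (ht : t ∈ Ico 0 T)
    {z : ℝ} (hz : 0 ≤ z) : IntervalIntegrable (fun x => φ x t) volume 0 z := by
  apply ContinuousOn.intervalIntegrable
  rw [uIcc_of_le hz]
  exact (phi_continuousOn_space hsol ht).mono Icc_subset_Ici_self

lemma le_Phi (hsol : IsFlowMapSolution (fun _ => ε₀) g φ (Ico 0 T)) {t : ℝ}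
    (ht : t ∈ Ico 0 T) {z c : ℝ} (hz : 0 ≤ z) (h : ∀ σ ∈ Icc 0 z, c ≤ φ σ t) :
    c * z ≤ Phi φ z t := by
  have := intervalIntegral.integral_mono_on (μ := volume) hz
    intervalIntegrable_const (phi_intervalIntegrable hsol ht hz) h
  simpa [Phi, mul_comm] using this

lemma Phi_le (hsol : IsFlowMapSolution (fun _ => ε₀) g φ (Ico 0 T)) {t : ℝ}
    (ht : t ∈ Ico 0 T) {z c : ℝ} (hz : 0 ≤ z) (h : ∀ σ ∈ Icc 0 z, φ σ t ≤ c) :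
    Phi φ z t ≤ c * z := by
  have := intervalIntegral.integral_mono_on (μ := volume) hz
    (phi_intervalIntegrable hsol ht hz) intervalIntegrable_const h
  simpa [Phi, mul_comm] using this

lemma Phi_continuousOn (hsol : IsFlowMapSolution (fun _ => ε₀) g φ (Ico 0 T)) {t : ℝ}
    (ht : t ∈ Ico 0 T) {A : ℝ} (hA : 0 ≤ A) :
    ContinuousOn (fun z => Phi φ z t) (Icc 0 A) := by
  have := intervalIntegral.continuousOn_primitive_interval'
    (phi_intervalIntegrable hsol ht hA) left_mem_uIcc
  rwa [uIcc_of_le hA] at this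

lemma Phi_pos (hsol : IsFlowMapSolution (fun _ => ε₀) g φ (Ico 0 T))
    (hinf : ∀ T' < T, PosInfOn φ (Icc 0 T')) {t : ℝ}
    (ht : t ∈ Ico 0 T) {z : ℝ} (hz : 0 < z) : 0 < Phi φ z t := by
  obtain ⟨m, hm, h⟩ := hinf t ht.2
  exact (mul_pos hm hz).trans_le
    (le_Phi hsol ht hz.le fun σ hσ => h σ hσ.1 t ⟨ht.1, le_rfl⟩)

lemma quot_nonpos (hB : BootstrapData ε₀ K₀ K₁ g)
    (hsol : IsFlowMapSolution (fun _ => ε₀) g φ (Ico 0 T))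
    (hinf : ∀ T' < T, PosInfOn φ (Icc 0 T')) {t : ℝ}
    (ht : t ∈ Ico 0 T) {z : ℝ} (hz : 0 < z) : gD g z / Phi φ z t ≤ 0 :=
  div_nonpos_of_nonpos_of_nonneg (hB.2.2.2.2.2.2.1 z hz.le) (Phi_pos hsol hinf ht hz).le

/-- If `φ ≥ m` on `[0,z]`, `z ≤ 1`, the linear bound on `g'` cancels the linear growth of `Φ`. -/
lemma abs_quot_le (hB : BootstrapData ε₀ K₀ K₁ g)
    (hsol : IsFlowMapSolution (fun _ => ε₀) g φ (Ico 0 T)) {t m : ℝ} (ht : t ∈ Ico 0 T)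
    (hm : 0 < m) {z : ℝ} (hz : 0 < z) (hz1 : z ≤ 1) (h : ∀ σ ∈ Icc 0 z, m ≤ φ σ t) :
    ‖gD g z / Phi φ z t‖ ≤ ε₀ ^ 2 * K₁ / m := by
  obtain ⟨-, hK₀, hK, -, -, -, hneg, hlin⟩ := hB
  have h1 := le_Phi hsol ht hz.le h
  have h2 : 0 < m * z := mul_pos hm hz
  rw [norm_div, Real.norm_eq_abs, Real.norm_eq_abs, abs_of_nonpos (hneg z hz.le),
    abs_of_pos (h2.trans_le h1), div_le_div_iff₀ (h2.trans_le h1) hm]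
  have h3 := (hlin z ⟨hz.le, hz1⟩).2
  have h4 : 0 ≤ ε₀ ^ 2 * K₁ := by have := hK₀.trans hK; positivity
  calc -gD g z * m ≤ ε₀ ^ 2 * K₁ * z * m := by gcongr
    _ = ε₀ ^ 2 * K₁ * (m * z) := by ring
    _ ≤ _ := by gcongr

lemma quot_integrableOn (hB : BootstrapData ε₀ K₀ K₁ g)
    (hsol : IsFlowMapSolution (fun _ => ε₀) g φ (Ico 0 T))
    (hinf : ∀ T' < T, PosInfOn φ (Icc 0 T')) {t : ℝ} (ht : t ∈ Ico 0 T) :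
    IntegrableOn (fun z => gD g z / Phi φ z t) (Ioi 0) := by
  obtain ⟨A, hA1, hA⟩ := gD_eventually_zero hB.2.2.2.2.1
  obtain ⟨m, hm, h⟩ := hinf t ht.2
  have hgc : ContinuousOn (gD g) (Ici 0) :=
    hB.2.2.2.1.continuousOn_derivWithin (uniqueDiffOn_Ici 0) (by norm_num)
  have hc : ContinuousOn (fun z => gD g z / Phi φ z t) (Ioc 0 A) :=
    (hgc.mono fun z hz => hz.1.le).div
      ((Phi_continuousOn hsol ht (by linarith)).mono Ioc_subset_Icc_self)
      fun z hz => (Phi_pos hsol hinf ht hz.1).ne'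
  have hu : Ioi (0:ℝ) = Ioc 0 1 ∪ (Icc 1 A ∪ Ioi A) := by
    rw [Icc_union_Ioi_eq_Ici hA1]
    ext z; simp only [mem_Ioi, mem_union, mem_Ioc, mem_Ici]; grind
  rw [hu]
  refine IntegrableOn.union ?_ (IntegrableOn.union ?_ ?_)
  · refine IntegrableOn.of_bound (by simp)
      ((hc.mono (Ioc_subset_Ioc_right hA1)).aestronglyMeasurable measurableSet_Ioc)
      (ε₀ ^ 2 * K₁ / m) ?_
    filter_upwards [ae_restrict_mem measurableSet_Ioc] with z hz
    exact abs_quot_le hB hsol ht hm hz.1 hz.2 fun σ hσ => h σ hσ.1 t ⟨ht.1, le_rfl⟩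
  · exact (hc.mono fun z hz => ⟨by linarith [hz.1], hz.2⟩).integrableOn_Icc
  · refine integrableOn_zero.congr_fun (fun z hz => ?_) measurableSet_Ioi
    simp [hA z hz]

/-- `∂ₜ log φ(x,t) - ∂ₜ log φ(y,t)` is `∫_x^y g'/Φ`. -/
lemma rate_sub_rate (hB : BootstrapData ε₀ K₀ K₁ g)
    (hsol : IsFlowMapSolution (fun _ => ε₀) g φ (Ico 0 T))
    (hinf : ∀ T' < T, PosInfOn φ (Icc 0 T')) {t : ℝ} (ht : t ∈ Ico 0 T)
    {x y : ℝ} (hx : 0 ≤ x) (hxy : x ≤ y) :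
    (∫ z in Ioi x, gD g z / Phi φ z t) - ∫ z in Ioi y, gD g z / Phi φ z t
      = ∫ z in x..y, gD g z / Phi φ z t :=
  intervalIntegral.integral_Ioi_sub_Ioi
    ((quot_integrableOn hB hsol hinf ht).mono_set (Ioi_subset_Ioi hx)) hxy

lemma hasDeriv_log (hsol : IsFlowMapSolution (fun _ => ε₀) g φ (Ico 0 T))
    (hinf : ∀ T' < T, PosInfOn φ (Icc 0 T')) {x t : ℝ} (hx : 0 ≤ x) (ht : t ∈ Ico 0 T) :
    HasDerivWithinAt (fun s => Real.log (φ x s))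
      (∫ z in Ioi x, gD g z / Phi φ z t) (Ico 0 T) t := by
  have hp := phi_pos hinf hx ht
  have := (hsol.2.2 x hx t ht).log hp.ne'
  rwa [mul_div_cancel_left₀ _ hp.ne'] at this

/-- Monotonicity from a derivative bound on an initial piece `[0,t]` of the half-open
time interval on which one-sided derivatives are given. -/
lemma monotoneOn_time {f f' : ℝ → ℝ} {t : ℝ} (ht : t ∈ Ico 0 T)
    (hf : ∀ s ∈ Ico 0 T, HasDerivWithinAt f (f' s) (Ico 0 T) s)
    (h : ∀ s ∈ Icc 0 t, 0 ≤ f' s) : MonotoneOn f (Icc 0 t) := by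
  have hsub : Icc 0 t ⊆ Ico 0 T := fun s hs => ⟨hs.1, hs.2.trans_lt ht.2⟩
  refine monotoneOn_of_hasDerivWithinAt_nonneg (f' := f') (convex_Icc _ _)
    (fun s hs => (hf s (hsub hs)).continuousWithinAt.mono hsub) (fun s hs => ?_) (fun s hs => ?_)
  · exact (hf s (hsub (interior_subset hs))).mono (interior_subset.trans hsub)
  · exact h s (interior_subset hs)

/-- `φ(x,·)` is nonincreasing in time, since `g' ≤ 0`. -/
lemma phi_antitone_time (hB : BootstrapData ε₀ K₀ K₁ g)
    (hsol : IsFlowMapSolution (fun _ => ε₀) g φ (Ico 0 T))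
    (hinf : ∀ T' < T, PosInfOn φ (Icc 0 T')) {x s t : ℝ} (hx : 0 ≤ x) (hs : 0 ≤ s)
    (hst : s ≤ t) (ht : t < T) : φ x t ≤ φ x s := by
  have hm := monotoneOn_time (t := t) ⟨hs.trans hst, ht⟩
    (fun r hr => (hasDeriv_log hsol hinf hx hr).neg) (fun r hr => ?_)
  · have h := hm ⟨hs, hst⟩ ⟨hs.trans hst, le_rfl⟩ hst
    simp only [Pi.neg_apply, neg_le_neg_iff] at h
    exact (Real.log_le_log_iff (phi_pos hinf hx ⟨hs.trans hst, ht⟩)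
      (phi_pos hinf hx ⟨hs, hst.trans_lt ht⟩)).1 h
  · rw [neg_nonneg]
    exact setIntegral_nonpos measurableSet_Ioi fun z hz =>
      quot_nonpos hB hsol hinf ⟨hr.1, hr.2.trans_lt ht⟩ (hx.trans_lt hz)

/-- `φ(·,t)` is nondecreasing in space: it starts constant, and the logarithmic decay rate
`∫_x^∞ |g'|/Φ` is nonincreasing in `x`. -/
lemma phi_mono_space (hB : BootstrapData ε₀ K₀ K₁ g)
    (hsol : IsFlowMapSolution (fun _ => ε₀) g φ (Ico 0 T))
    (hinf : ∀ T' < T, PosInfOn φ (Icc 0 T')) {x y t : ℝ} (hx : 0 ≤ x) (hxy : x ≤ y)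
    (ht : t ∈ Ico 0 T) : φ x t ≤ φ y t := by
  have hy := hx.trans hxy
  have hm := monotoneOn_time (t := t) ht
    (fun r hr => (hasDeriv_log hsol hinf hy hr).sub (hasDeriv_log hsol hinf hx hr))
    (fun r hr => ?_)
  · have h := hm ⟨le_rfl, ht.1⟩ ⟨ht.1, le_rfl⟩ ht.1
    simp only [Pi.sub_apply, hsol.2.1 x hx, hsol.2.1 y hy, sub_self, sub_nonneg] at h
    exact (Real.log_le_log_iff (phi_pos hinf hx ht) (phi_pos hinf hy ht)).1 h
  · have hr' : r ∈ Ico 0 T := ⟨hr.1, hr.2.trans_lt ht.2⟩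
    rw [← neg_nonpos, neg_sub, rate_sub_rate hB hsol hinf hr' hx hxy,
      intervalIntegral.integral_of_le hxy]
    exact setIntegral_nonpos measurableSet_Ioc fun z hz =>
      quot_nonpos hB hsol hinf hr' (hx.trans_lt hz.1)

/-- The ratio `φ(x,t)/φ(0,t)` grows at logarithmic rate at most `ε₀² K₁ x / ε(t)`. -/
lemma rate_diff_le (hB : BootstrapData ε₀ K₀ K₁ g)
    (hsol : IsFlowMapSolution (fun _ => ε₀) g φ (Ico 0 T))
    (hinf : ∀ T' < T, PosInfOn φ (Icc 0 T')) {x t : ℝ} (hx : 0 ≤ x) (hx1 : x ≤ 1)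
    (ht : t ∈ Ico 0 T) :
    (∫ z in Ioi x, gD g z / Phi φ z t) - ∫ z in Ioi 0, gD g z / Phi φ z t
      ≤ ε₀ ^ 2 * K₁ / φ 0 t * x := by
  have h := intervalIntegral.norm_integral_le_of_norm_le_const (a := 0) (b := x)
    (f := fun z => gD g z / Phi φ z t) (C := ε₀ ^ 2 * K₁ / φ 0 t) (fun z hz => by
      rw [uIoc_of_le hx] at hz
      exact abs_quot_le hB hsol ht (phi_pos hinf le_rfl ht) hz.1 (hz.2.trans hx1)
        fun σ hσ => phi_mono_space hB hsol hinf le_rfl hσ.1 ht)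
  rw [← rate_sub_rate hB hsol hinf ht le_rfl hx, sub_zero, abs_of_nonneg hx] at h
  have := neg_le_of_abs_le h
  linarith

/-- If the bootstrap bound `φ(l(s),s) ≤ κ ε(s)` holds up to time `t`, then at each
`z ∈ [l(t),1]` it can be evaluated at the time `s` with `l(s) = z`, which bounds
`φ(z,t) ≤ φ(z,s)` by `κ z^{1/β}`. Points beyond `l(0)` are covered by `φ ≤ ε₀`. -/
lemma phi_le_rpow_s11 {β κ : ℝ} (hB : BootstrapData ε₀ K₀ K₁ g) (hβ : β ∈ Ioo (0:ℝ) 1) (hκ : 1 < κ)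
    (hsol : IsFlowMapSolution (fun _ => ε₀) g φ (Ico 0 T))
    (hinf : ∀ T' < T, PosInfOn φ (Icc 0 T')) {t : ℝ} (ht : t ∈ Ico 0 T)
    (hboot : ∀ s ∈ Icc 0 t, φ (φ 0 s ^ β) s ≤ κ * φ 0 s)
    {z : ℝ} (hz : φ 0 t ^ β ≤ z) : φ z t ≤ κ * z ^ (1 / β) := by
  have hp := phi_pos hinf le_rfl ht
  have hz0 : 0 ≤ z := (Real.rpow_nonneg hp.le _).trans hz
  have hε : 0 < ε₀ := hB.1.1
  have hlow : φ 0 t ≤ z ^ (1 / β) := by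
    have := Real.rpow_le_rpow (Real.rpow_nonneg hp.le _) hz (one_div_pos.2 hβ.1).le
    rwa [← Real.rpow_mul hp.le, mul_one_div_cancel hβ.1.ne', Real.rpow_one] at this
  rcases le_total (z ^ (1 / β)) ε₀ with hle | hge
  · have hc : ContinuousOn (fun s => φ 0 s) (Icc 0 t) := fun s hs =>
      (hsol.2.2 0 le_rfl s ⟨hs.1, hs.2.trans_lt ht.2⟩).continuousWithinAt.mono
        fun r hr => ⟨hr.1, hr.2.trans_lt ht.2⟩
    obtain ⟨s, hs, hse⟩ := intermediate_value_Icc' ht.1 hc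
      (show z ^ (1 / β) ∈ Icc (φ 0 t) (φ 0 0) from ⟨hlow, by rwa [hsol.2.1 0 le_rfl]⟩)
    have hse' : φ 0 s ^ β = z := by
      simp only at hse
      rw [hse, ← Real.rpow_mul hz0, one_div_mul_cancel hβ.1.ne', Real.rpow_one]
    have h := hboot s hs
    rw [hse'] at h
    calc φ z t ≤ φ z s := phi_antitone_time hB hsol hinf hz0 hs.1 hs.2 ht.2
      _ ≤ κ * φ 0 s := h
      _ = _ := by rw [← hse]
  · calc φ z t ≤ φ z 0 := phi_antitone_time hB hsol hinf hz0 le_rfl ht.1 ht.2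
      _ = ε₀ := hsol.2.1 z hz0
      _ ≤ 1 * z ^ (1 / β) := by linarith
      _ ≤ _ := by gcongr

/-- Under the bootstrap bound, `ε` decays at logarithmic rate at least a multiple of
`ε^{β-1}`: the contribution of `z ∈ [l,1]`, where `Φ(z) ≤ κ z^{1+1/β}`, suffices. -/
lemma decay_rate {β κ : ℝ} (hB : BootstrapData ε₀ K₀ K₁ g) (hβ : β ∈ Ioo (0:ℝ) 1) (hκ : 1 < κ)
    (hcond2 : ε₀ ^ (1 - β) ≤ 1 / 2)
    (hsol : IsFlowMapSolution (fun _ => ε₀) g φ (Ico 0 T))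
    (hinf : ∀ T' < T, PosInfOn φ (Icc 0 T')) {t : ℝ} (ht : t ∈ Ico 0 T)
    (hboot : ∀ s ∈ Icc 0 t, φ (φ 0 s ^ β) s ≤ κ * φ 0 s) :
    ε₀ ^ 2 * K₀ / κ * (β / (1 - β)) / 2 * φ 0 t ^ (β - 1)
      ≤ -∫ z in Ioi 0, gD g z / Phi φ z t := by
  obtain ⟨hβ0, hβ1⟩ := hβ
  have hp := phi_pos hinf le_rfl ht
  have hκ0 : 0 < κ := by linarith
  have hεε : φ 0 t ≤ ε₀ := by
    have := phi_antitone_time hB hsol hinf le_rfl le_rfl ht.1 ht.2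
    rwa [hsol.2.1 0 le_rfl] at this
  set l := φ 0 t ^ β with hl
  have hl0 : 0 < l := Real.rpow_pos_of_pos hp _
  have hl1 : l ≤ 1 := Real.rpow_le_one hp.le (hεε.trans hB.1.2.le) hβ0.le
  have hK₀ := hB.2.1
  have hint := quot_integrableOn hB hsol hinf ht
  have hsubs : Ioc l 1 ⊆ Ioi 0 := fun z hz => hl0.trans hz.1
  have h1 : (∫ z in l..1, -(gD g z / Phi φ z t)) ≤ -∫ z in Ioi 0, gD g z / Phi φ z t := by
    rw [intervalIntegral.integral_of_le hl1, ← integral_neg]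
    refine setIntegral_mono_set hint.neg ?_ hsubs.eventuallyLE
    filter_upwards [ae_restrict_mem measurableSet_Ioi] with z hz
    exact neg_nonneg.2 (quot_nonpos hB hsol hinf ht hz)
  have h0 : (0:ℝ) ∉ uIcc l 1 := by
    rw [uIcc_of_le hl1]; exact fun h => absurd h.1 (not_le.2 hl0)
  have h2 : (∫ z in l..1, ε₀ ^ 2 * K₀ / κ * z ^ (-(1 / β)))
      ≤ ∫ z in l..1, -(gD g z / Phi φ z t) := by
    refine intervalIntegral.integral_mono_on hl1
      ((intervalIntegral.intervalIntegrable_rpow (Or.inr h0)).const_mul _) ?_ fun z hz => ?_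
    · rw [intervalIntegrable_iff_integrableOn_Ioc_of_le hl1]
      exact (hint.mono_set hsubs).neg
    · have hz0 : 0 < z := hl0.trans_le hz.1
      have hP := Phi_le hsol ht hz0.le (c := κ * z ^ (1 / β)) fun σ hσ =>
        (phi_mono_space hB hsol hinf hσ.1 hσ.2 ht).trans
          (phi_le_rpow_s11 hB ⟨hβ0, hβ1⟩ hκ hsol hinf ht hboot hz.1)
      have hPp := Phi_pos hsol hinf ht hz0
      have hg := (hB.2.2.2.2.2.2.2 z ⟨hz0.le, hz.2⟩).1
      have hzp : 0 < z ^ (1 / β) := Real.rpow_pos_of_pos hz0 _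
      rw [← neg_div (Phi φ z t), le_div_iff₀ hPp, Real.rpow_neg hz0.le]
      calc ε₀ ^ 2 * K₀ / κ * (z ^ (1 / β))⁻¹ * Phi φ z t
          ≤ ε₀ ^ 2 * K₀ / κ * (z ^ (1 / β))⁻¹ * (κ * z ^ (1 / β) * z) := by gcongr
        _ = ε₀ ^ 2 * K₀ * z := by field_simp
        _ ≤ _ := hg
  have hne : (1:ℝ) - β ≠ 0 := by linarith
  have h3 : (∫ z in l..1, ε₀ ^ 2 * K₀ / κ * z ^ (-(1 / β)))
      = ε₀ ^ 2 * K₀ / κ * (β / (1 - β)) * (φ 0 t ^ (β - 1) - 1) := by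
    have hr : -(1 / β) ≠ -1 := by
      intro h
      have : 1 / β = 1 := by linarith
      rw [div_eq_one_iff_eq hβ0.ne'] at this
      linarith
    have he : β * (-(1 / β) + 1) = β - 1 := by field_simp; ring
    rw [intervalIntegral.integral_const_mul, integral_rpow (Or.inr ⟨hr, h0⟩), hl,
      ← Real.rpow_mul hp.le, he, Real.one_rpow]
    have hd : -(1 / β) + 1 = -((1 - β) / β) := by field_simp; ring
    rw [hd]
    field_simp
    ring
  -- `ε ≤ ε₀` and `ε₀^{1-β} ≤ 1/2` give `ε^{β-1} ≥ 2`, so `ε^{β-1} - 1 ≥ ε^{β-1}/2`.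
  have h4 : 2 ≤ φ 0 t ^ (β - 1) := by
    have h5 : φ 0 t ^ (1 - β) ≤ 1 / 2 :=
      (Real.rpow_le_rpow hp.le hεε (by linarith)).trans hcond2
    have h6 : 0 < φ 0 t ^ (1 - β) := Real.rpow_pos_of_pos hp _
    rw [show β - 1 = -(1 - β) by ring, Real.rpow_neg hp.le]
    rw [le_inv_comm₀ two_pos h6]; linarith
  have hC : 0 ≤ ε₀ ^ 2 * K₀ / κ * (β / (1 - β)) := by
    have : 0 < 1 - β := by linarith
    positivity
  have h7 := mul_le_mul_of_nonneg_left
    (show φ 0 t ^ (β - 1) / 2 ≤ φ 0 t ^ (β - 1) - 1 by linarith) hC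
  linarith

/-- The self-improvement of the bootstrap bound: comparing `log (φ(x,·)/ε)` with a multiple of
`x ε^{-β}`, whose derivative controls `x/ε`, and taking `x = l(t)`. -/
lemma bootstrap_improve {β κ : ℝ} (hB : BootstrapData ε₀ K₀ K₁ g) (hβ : β ∈ Ioo (0:ℝ) 1)
    (hκ : 1 < κ) (hcond2 : ε₀ ^ (1 - β) ≤ 1 / 2)
    (hcond3 : 2 * K₁ / (K₀ * cBeta β * β) < Real.log κ / κ)
    (hsol : IsFlowMapSolution (fun _ => ε₀) g φ (Ico 0 T))
    (hinf : ∀ T' < T, PosInfOn φ (Icc 0 T')) {t : ℝ} (ht : t ∈ Ico 0 T)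
    (hboot : ∀ s ∈ Icc 0 t, φ (φ 0 s ^ β) s ≤ κ * φ 0 s) :
    φ (φ 0 t ^ β) t < κ * φ 0 t := by
  have hp := phi_pos hinf le_rfl ht
  have hκ0 : 0 < κ := by linarith
  have hεε : φ 0 t ≤ ε₀ := by
    have := phi_antitone_time hB hsol hinf le_rfl le_rfl ht.1 ht.2
    rwa [hsol.2.1 0 le_rfl] at this
  have hK₀ := hB.2.1
  have hK₁ := hK₀.trans hB.2.2.1
  have hε₀ := hB.1.1
  have hβ0 := hβ.1
  have hβ1 : 0 < 1 - β := by linarith [hβ.2]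
  set x := φ 0 t ^ β with hxdef
  have hx0 : 0 < x := Real.rpow_pos_of_pos hp _
  have hx1 : x ≤ 1 := Real.rpow_le_one hp.le (hεε.trans hB.1.2.le) hβ0.le
  -- `M` is chosen so that the growth rate of the ratio is at most `M x` times that of `ε^{-β}`.
  set M := 2 * K₁ * κ * (1 - β) / (K₀ * β ^ 2) with hM
  have hMpos : 0 < M := by positivity
  have hMlog : M < Real.log κ := by
    rw [lt_div_iff₀ hκ0] at hcond3
    refine lt_of_le_of_lt ?_ hcond3
    have : 2 * K₁ / (K₀ * cBeta β * β) * κ = M * ((2 * β + 1) / (β + 1)) := by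
      rw [hM, cBeta]; field_simp
    rw [this]
    refine le_mul_of_one_le_right hMpos.le ?_
    rw [le_div_iff₀ (by linarith)]; linarith
  have hmono := monotoneOn_time ht
    (fun r hr => (((hsol.2.2 0 le_rfl r hr).rpow_const (p := -β)
        (Or.inl (phi_pos hinf le_rfl hr).ne')).const_mul (M * x)).sub
      ((hasDeriv_log hsol hinf hx0.le hr).sub (hasDeriv_log hsol hinf le_rfl hr)))
    (fun r hr => by
      have hr' : r ∈ Ico 0 T := ⟨hr.1, hr.2.trans_lt ht.2⟩
      have hpr := phi_pos hinf le_rfl hr'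
      have hd := decay_rate hB hβ hκ hcond2 hsol hinf hr'
        (fun s hs => hboot s ⟨hs.1, hs.2.trans hr.2⟩)
      have hu := rate_diff_le hB hsol hinf hx0.le hx1 hr'
      set A := ∫ z in Ioi 0, gD g z / Phi φ z r with hA
      rw [sub_nonneg]
      refine hu.trans ?_
      have e1 : φ 0 r ^ (-β - 1) * φ 0 r = φ 0 r ^ (-β) := by
        rw [← Real.rpow_add_one hpr.ne']; ring_nf
      have e2 : φ 0 r ^ (-β) * φ 0 r ^ (β - 1) = (φ 0 r)⁻¹ := by
        rw [← Real.rpow_add hpr, ← Real.rpow_neg_one]; ring_nf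
      have hq : 0 < φ 0 r ^ (-β) := Real.rpow_pos_of_pos hpr _
      calc ε₀ ^ 2 * K₁ / φ 0 r * x
          = M * x * β * (ε₀ ^ 2 * K₀ / κ * (β / (1 - β)) / 2) * (φ 0 r)⁻¹ := by
            rw [hM]; field_simp
        _ = M * x * β * φ 0 r ^ (-β)
              * (ε₀ ^ 2 * K₀ / κ * (β / (1 - β)) / 2 * φ 0 r ^ (β - 1)) := by
            rw [← e2]; ring
        _ ≤ M * x * β * φ 0 r ^ (-β) * -A := by gcongr
        _ = M * x * (φ 0 r * A * -β * φ 0 r ^ (-β - 1)) := by rw [← e1]; ring)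
  have h := hmono ⟨le_rfl, ht.1⟩ ⟨ht.1, le_rfl⟩ ht.1
  simp only [Pi.sub_apply, hsol.2.1 x hx0.le, hsol.2.1 0 le_rfl, sub_self, sub_zero] at h
  have h0 : 0 ≤ M * x * ε₀ ^ (-β) := by positivity
  have hxe : M * x * φ 0 t ^ (-β) = M := by
    rw [mul_assoc, hxdef, ← Real.rpow_add hp]; simp
  rw [hxe] at h
  rw [← Real.log_lt_log_iff (phi_pos hinf hx0.le ht) (by positivity),
    Real.log_mul hκ0.ne' hp.ne']
  linarith

end Solution

/-- Lemma `lemma_5`: in the bootstrap setup, if the three conditions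
`ε₀ ≤ κ ε₀^{1/β}`, `ε₀^{1−β} ≤ 1/2` and `2K₁/(K₀ c_β β) < log κ / κ` hold, then the
bootstrap property (B) holds on the whole interval `[0,T)`. -/
theorem statement11 (ε₀ K₀ K₁ β κ T : ℝ) (g : ℝ → ℝ) (φ : ℝ → ℝ → ℝ)
    (hB : BootstrapData ε₀ K₀ K₁ g)
    (hβ : β ∈ Set.Ioo (0:ℝ) 1) (hκ : 1 < κ)
    (hcond1 : ε₀ ≤ κ * ε₀ ^ (1 / β))
    (hcond2 : ε₀ ^ (1 - β) ≤ 1 / 2)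
    (hcond3 : 2 * K₁ / (K₀ * cBeta β * β) < Real.log κ / κ)
    (hT : 0 < T)
    (hsol : IsFlowMapSolution (fun _ => ε₀) g φ (Set.Ico 0 T))
    (hinf : ∀ T' < T, PosInfOn φ (Set.Icc 0 T')) :
    BootstrapB φ κ β (Set.Ico 0 T) := by
  set h : ℝ → ℝ := fun t => φ (φ 0 t ^ β) t - κ * φ 0 t with hh
  have hpos : ∀ t ∈ Ico 0 T, 0 < φ 0 t := fun t ht => phi_pos hinf le_rfl ht
  have hε : ContinuousOn (fun t => φ 0 t) (Ico 0 T) := fun s hs =>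
    (hsol.2.2 0 le_rfl s hs).continuousWithinAt
  have hl : ContinuousOn (fun t => φ 0 t ^ β) (Ico 0 T) :=
    hε.rpow_const fun t ht => Or.inl (hpos t ht).ne'
  have hcont : ContinuousOn h (Ico 0 T) :=
    (hsol.1.continuousOn.comp (f := fun t : ℝ => (φ 0 t ^ β, t)) (hl.prodMk continuousOn_id)
      fun t ht => ⟨Real.rpow_nonneg (hpos t ht).le _, ht⟩).sub (hε.const_mul κ)
  have key : ∀ t ∈ Ico 0 T, h t < 0 := by
    intro t₁ ht₁
    by_contra! hge
    have hsub : Icc 0 t₁ ⊆ Ico 0 T := fun s hs => ⟨hs.1, hs.2.trans_lt ht₁.2⟩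
    -- `t` is the first time at which the strict bound fails.
    set S := Icc 0 t₁ ∩ h ⁻¹' Ici 0
    have hSc : IsClosed S :=
      (hcont.mono hsub).preimage_isClosed_of_isClosed isClosed_Icc isClosed_Ici
    have hSb : BddBelow S := ⟨0, fun s hs => hs.1.1⟩
    have hmem : sInf S ∈ S := hSc.csInf_mem ⟨t₁, ⟨ht₁.1, le_rfl⟩, hge⟩ hSb
    set t := sInf S with htdef
    have ht : t ∈ Ico 0 T := hsub hmem.1
    have hbelow : ∀ s ∈ Ico 0 t, h s < 0 := by
      intro s hs
      by_contra! hs'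
      exact absurd (csInf_le hSb ⟨⟨hs.1, hs.2.le.trans hmem.1.2⟩, hs'⟩) (not_le.2 hs.2)
    have hstart : h 0 < 0 := by
      have h0 := hsol.2.1 0 le_rfl
      have h1 := hsol.2.1 (ε₀ ^ β) (Real.rpow_nonneg hB.1.1.le _)
      simp only at h0 h1
      simp only [hh, h0, h1]
      nlinarith [hB.1.1]
    have ht0 : 0 < t := by
      refine lt_of_le_of_ne ht.1 fun he => ?_
      have := hmem.2
      rw [← he] at this
      exact absurd hstart (not_lt.2 this)
    have hle : h t ≤ 0 := by
      have hcl : closure (Ico 0 t) = Icc 0 t := closure_Ico ht0.ne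
      have hc : ContinuousOn h (closure (Ico 0 t)) := by
        rw [hcl]; exact hcont.mono fun s hs => ⟨hs.1, hs.2.trans_lt ht.2⟩
      exact le_on_closure (fun s hs => (hbelow s hs).le) hc continuousOn_const
        (by rw [hcl]; exact ⟨ht.1, le_rfl⟩)
    have himp := bootstrap_improve hB hβ hκ hcond2 hcond3 hsol hinf ht fun s hs => by
      rcases hs.2.lt_or_eq with hlt | rfl
      · exact (sub_neg.1 (hbelow s ⟨hs.1, hlt⟩)).le
      · exact sub_nonpos.1 hle
    exact absurd (sub_neg.2 himp) (not_lt.2 hmem.2)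
  intro t ht x hx
  exact (phi_mono_space hB hsol hinf hx.1 hx.2 ht).trans (sub_neg.1 (key t ht)).le
end
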